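/- Let ψ be a Cartan–Hadamard model function with ∫₀^∞ Θ(s)^{1/(p−1)} ds = +∞ and such that either (a) there exist γ ∈ [0,1) and ℓ ∈ (0,∞) with lim_{r→∞} r^γ·ψ′(r)/ψ(r) = ℓ, or (b) lim_{r→∞} ψ′(r)/ψ(r) = +∞ and lim_{r→∞} (ψ(r)/ψ′(r))·(d/dr) log(ψ′(r)/ψ(r)) = 0. Let u be a global radial solution. Then lim_{r→∞} (−u′(r))·u(r)^{−q/(p−1)}·(ψ′(r)/ψ(r))^{1/(p−1)} = (1/(n−1))^{1/(p−1)}. -/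

import Mathlib

open Real Filter MeasureTheory
open scoped ENNReal Topology

/-- The volume-to-surface ratio `Θ(r) = (∫₀ʳ ψ(s)^{n-1} ds) / ψ(r)^{n-1}`. -/
noncomputable def Theta (n : ℕ) (ψ : ℝ → ℝ) (r : ℝ) : ℝ :=
  (∫ s in (0:ℝ)..r, ψ s ^ (n - 1)) / ψ r ^ (n - 1)

/-- A Cartan–Hadamard model function: smooth, `ψ(0)=0`, `ψ'(0)=1`, convex on `[0,∞)`,
positive on `(0,∞)`. -/
def IsCHModel (ψ : ℝ → ℝ) : Prop :=
  ContDiff ℝ (⊤ : ℕ∞) ψ ∧ ψ 0 = 0 ∧ deriv ψ 0 = 1 ∧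
    (∀ r : ℝ, 0 ≤ r → 0 ≤ deriv (deriv ψ) r) ∧ (∀ r : ℝ, 0 < r → 0 < ψ r)

/-- A radial solution on `[0,T)` (with `T ∈ (0,∞]`) with initial datum `α`:
`u ∈ C¹([0,T))`, `u(0)=α`, `u'(0)=0`, `u>0` on `[0,T)`, and
`(ψ^{n-1} |u'|^{p-2} u')' = -ψ^{n-1} u^q` on `(0,T)`. -/
structure IsRadialSolution (n : ℕ) (p q : ℝ) (ψ : ℝ → ℝ) (T : ℝ≥0∞) (α : ℝ)
    (u : ℝ → ℝ) : Prop where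
  init : u 0 = α
  deriv_init : deriv u 0 = 0
  pos : ∀ r : ℝ, 0 ≤ r → ENNReal.ofReal r < T → 0 < u r
  diff : ∀ r : ℝ, 0 ≤ r → ENNReal.ofReal r < T → DifferentiableAt ℝ u r
  deriv_cont : ContinuousOn (deriv u) {r : ℝ | 0 ≤ r ∧ ENNReal.ofReal r < T}
  eqn : ∀ r : ℝ, 0 < r → ENNReal.ofReal r < T →
    HasDerivAt (fun s => ψ s ^ (n - 1) * |deriv u s| ^ (p - 2) * deriv u s)
      (-(ψ r ^ (n - 1) * u r ^ q)) r

/-- The energy function `F_u(r) = ((p-1)/p)|u'(r)|^p + u(r)^{q+1}/(q+1)`. -/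
noncomputable def energyF (p q : ℝ) (u : ℝ → ℝ) (r : ℝ) : ℝ :=
  (p - 1) / p * |deriv u r| ^ p + u r ^ (q + 1) / (q + 1)

/-- The Pohozaev function
`P_u(r) = (∫₀ʳ ψ^{n-1}) F_u(r) + (ψ(r)^{n-1}/(q+1)) |u'(r)|^{p-2} u'(r) u(r)`. -/
noncomputable def pohozaevP (n : ℕ) (p q : ℝ) (ψ u : ℝ → ℝ) (r : ℝ) : ℝ :=
  (∫ s in (0:ℝ)..r, ψ s ^ (n - 1)) * energyF p q u r +
    ψ r ^ (n - 1) / (q + 1) * (|deriv u r| ^ (p - 2) * deriv u r * u r)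

/-- `K(r) = ((p-1)/p + 1/(q+1)) ψ(r)^{n-1} - (n-1)(ψ'(r)/ψ(r)) ∫₀ʳ ψ^{n-1}`. -/
noncomputable def Kfun (n : ℕ) (p q : ℝ) (ψ : ℝ → ℝ) (r : ℝ) : ℝ :=
  ((p - 1) / p + 1 / (q + 1)) * ψ r ^ (n - 1) -
    ((n : ℝ) - 1) * (deriv ψ r / ψ r) * ∫ s in (0:ℝ)..r, ψ s ^ (n - 1)

/-- Condition (a): `r^γ ψ'(r)/ψ(r) → ℓ ∈ (0,∞)` for some `γ ∈ [0,1)`. -/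
def CondA (ψ : ℝ → ℝ) : Prop :=
  ∃ γ ℓ : ℝ, 0 ≤ γ ∧ γ < 1 ∧ 0 < ℓ ∧
    Tendsto (fun r : ℝ => r ^ γ * deriv ψ r / ψ r) atTop (nhds ℓ)

/-- Condition (b): `ψ'/ψ → +∞` and `(ψ/ψ') (log(ψ'/ψ))' → 0`. -/
def CondB (ψ : ℝ → ℝ) : Prop :=
  Tendsto (fun r : ℝ => deriv ψ r / ψ r) atTop atTop ∧
    Tendsto (fun r : ℝ => ψ r / deriv ψ r *
      deriv (fun s : ℝ => Real.log (deriv ψ s / ψ s)) r) atTop (nhds 0)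

/-!
Take the logarithm of the volume `∫₀ʳ ψ ^ (n - 1)` as time, so that `dr = Θ dt`. With
`e = 1 / (p - 1)`, the rescaled logarithmic slope `x = Θ |u'| / u` and the flux ratio
`z = |u'| ^ (p - 1) / (Θ u ^ q)` of a radial solution satisfy

  `ẋ = x (e (1 / z - 1) + x + η)`,  `ż = 1 - z (1 - q x)`,

where `η = p e (1 - (n - 1) (ψ' / ψ) Θ)`. Either asymptotic condition on `ψ` makes
`(ψ' / ψ) Θ → 1 / (n - 1)`, hence `η → 0`, and the claim becomes `z → 1`.

Since `u` decreases, `z ≥ 1`. The Pohozaev function is nonpositive, which says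
`x ≤ p / ((p - 1) (q + 1)) < e`. The logarithmic derivative of `x / z ^ e` is `η - (q e - 1) x`
with `q e > 1`, so `x / z ^ e → 0`. Hence wherever `x` is not small `z` is large, and there
`ẋ ≈ -(e - x) x` with `e - x` bounded away from `0`. Therefore `x → 0`, and the equation for `z`
becomes `ż ≈ 1 - z`.
-/

/-- A divergent clock: from some point on `G` is a primitive of the positive rate `g`, and it tends
to infinity. A function with derivative `g r * w r` has derivative `w` with respect to the time
`G`, and divergence of `G` lets a bound on `w` accumulate. -/
structure IsClock (G g : ℝ → ℝ) : Prop where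
  hasDerivAt : ∀ᶠ r in atTop, HasDerivAt G (g r) r
  pos : ∀ᶠ r in atTop, 0 < g r
  tendsto_atTop : Tendsto G atTop atTop

namespace IsClock

variable {G g f w : ℝ → ℝ} {L c : ℝ}

theorem log_comp (hG : IsClock G g) :
    IsClock (fun r => log (G r)) (fun r => g r / G r) where
  hasDerivAt := by
    filter_upwards [hG.hasDerivAt, hG.tendsto_atTop.eventually_gt_atTop 0] with r h h0
    exact h.log h0.ne'
  pos := by
    filter_upwards [hG.pos, hG.tendsto_atTop.eventually_gt_atTop 0] with r h h0
    exact div_pos h h0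
  tendsto_atTop := tendsto_log_atTop.comp hG.tendsto_atTop

theorem rpow_neg {γ : ℝ} (hγ : γ < 1) :
    IsClock (fun r => r ^ (1 - γ) / (1 - γ)) (fun r => r ^ (-γ)) where
  hasDerivAt := by
    filter_upwards [eventually_gt_atTop 0] with r hr
    have hγ' : 1 - γ ≠ 0 := by linarith
    refine ((hasDerivAt_rpow_const (Or.inl hr.ne')).div_const (1 - γ)).congr_deriv ?_
    rw [mul_div_cancel_left₀ _ hγ']
    ring_nf
  pos := (eventually_gt_atTop 0).mono fun _ hr => rpow_pos_of_pos hr _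
  tendsto_atTop := (tendsto_rpow_atTop (by linarith)).atTop_div_const (by linarith)

theorem exists_lt_of_deriv_le (hG : IsClock G g) (hc : 0 < c)
    (hf : ∀ᶠ r in atTop, HasDerivAt f (g r * w r) r)
    (hw : ∀ᶠ r in atTop, L ≤ f r → w r ≤ -c) (R : ℝ) : ∃ r, R ≤ r ∧ f r < L := by
  by_contra! hL
  obtain ⟨R₀, hR₀⟩ := eventually_atTop.1
    (hf.and (hw.and (hG.hasDerivAt.and (hG.pos.and (eventually_ge_atTop R)))))
  have hderiv : ∀ r ∈ Set.Ici R₀, HasDerivAt (fun r => f r + c * G r) (g r * w r + c * g r) r :=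
    fun r hr => (hR₀ r hr).1.add ((hR₀ r hr).2.2.1.const_mul c)
  have hanti : AntitoneOn (fun r => f r + c * G r) (Set.Ici R₀) := by
    refine antitoneOn_of_hasDerivWithinAt_nonpos (convex_Ici R₀)
      (fun r hr => (hderiv r hr).continuousAt.continuousWithinAt)
      (fun r hr => (hderiv r (interior_subset hr)).hasDerivWithinAt) fun r hr => ?_
    obtain ⟨-, hwr, -, hgr, hRr⟩ := hR₀ r (interior_subset hr)
    nlinarith [hwr (hL r hRr)]
  obtain ⟨r, hGr, hr⟩ := ((hG.tendsto_atTop.eventually_gt_atTop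
    ((f R₀ + c * G R₀ - L) / c)).and (eventually_ge_atTop R₀)).exists
  have hle : f r + c * G r ≤ f R₀ + c * G R₀ := hanti Set.self_mem_Ici hr hr
  rw [div_lt_iff₀ hc] at hGr
  linarith [hL r (hR₀ r hr).2.2.2.2]

theorem eventually_le_of_deriv_le (hG : IsClock G g) (hc : 0 < c)
    (hf : ∀ᶠ r in atTop, HasDerivAt f (g r * w r) r)
    (hw : ∀ᶠ r in atTop, L ≤ f r → w r ≤ -c) : ∀ᶠ r in atTop, f r ≤ L := by
  obtain ⟨R, hR⟩ := eventually_atTop.1 (hf.and (hw.and hG.pos))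
  obtain ⟨r₀, hr₀, hfr₀⟩ := hG.exists_lt_of_deriv_le hc hf hw R
  filter_upwards [eventually_ge_atTop r₀] with r hr
  refine image_le_of_deriv_right_lt_deriv_boundary (B := fun _ => L) (B' := fun _ => 0)
    (fun s hs => (hR s (hr₀.trans hs.1)).1.continuousAt.continuousWithinAt)
    (fun s hs => (hR s (hr₀.trans hs.1)).1.hasDerivWithinAt) hfr₀.le
    (fun s => hasDerivAt_const s L) (fun s hs hLs => ?_) ⟨hr, le_rfl⟩
  obtain ⟨-, hws, hgs⟩ := hR s (hr₀.trans hs.1)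
  exact mul_neg_of_pos_of_neg hgs ((hws hLs.ge).trans_lt (neg_neg_of_pos hc))

theorem tendsto_zero_of_deriv_le (hG : IsClock G g) (hf0 : ∀ᶠ r in atTop, 0 ≤ f r)
    (hf : ∀ᶠ r in atTop, HasDerivAt f (g r * w r) r)
    (hw : ∀ b, 0 < b → ∃ c, 0 < c ∧ ∀ᶠ r in atTop, b ≤ f r → w r ≤ -c) :
    Tendsto f atTop (𝓝 0) := by
  refine tendsto_order.2 ⟨fun b hb => hf0.mono fun r hr => hb.trans_le hr, fun b hb => ?_⟩
  obtain ⟨c, hc, hwc⟩ := hw (b / 2) (half_pos hb)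
  exact (hG.eventually_le_of_deriv_le hc hf hwc).mono fun r hr => hr.trans_lt (half_lt_self hb)

theorem tendsto_of_linear_ode (hG : IsClock G g) {y a : ℝ → ℝ} {m : ℝ} (hm : 0 < m)
    (hy : ∀ᶠ r in atTop, HasDerivAt y (g r * (1 - y r * a r)) r)
    (ha : Tendsto a atTop (𝓝 m)) : Tendsto y atTop (𝓝 (1 / m)) := by
  have hsq : Tendsto (fun r => (y r - 1 / m) ^ 2) atTop (𝓝 0) := by
    refine hG.tendsto_zero_of_deriv_le (w := fun r => 2 * (y r - 1 / m) * (1 - y r * a r))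
      (.of_forall fun r => sq_nonneg _) (hy.mono fun r hr => ?_) fun b hb =>
        ⟨m * b / 4, by positivity, ?_⟩
    · refine ((hr.sub_const (1 / m)).pow 2).congr_deriv ?_
      push_cast
      ring
    have hdefect : Tendsto (fun r => 2 / m * (1 - 1 / m * a r) ^ 2) atTop (𝓝 0) := by
      simpa [hm.ne'] using (((ha.const_mul (1 / m)).const_sub 1).pow 2).const_mul (2 / m)
    filter_upwards [ha.eventually_const_lt (half_lt_self hm),
      hdefect.eventually_lt_const (show 0 < m * b / 4 by positivity)] with r har hdr hbr
    have hyoung : 2 * (y r - 1 / m) * (1 - 1 / m * a r) ≤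
        m / 2 * (y r - 1 / m) ^ 2 + 2 / m * (1 - 1 / m * a r) ^ 2 := by
      have hsplit : m / 2 * (y r - 1 / m) ^ 2 + 2 / m * (1 - 1 / m * a r) ^ 2 -
          2 * (y r - 1 / m) * (1 - 1 / m * a r) =
          (m * (y r - 1 / m) - 2 * (1 - 1 / m * a r)) ^ 2 / (2 * m) := by
        field_simp
        ring
      linarith [show 0 ≤ (m * (y r - 1 / m) - 2 * (1 - 1 / m * a r)) ^ 2 / (2 * m) by positivity]
    calc 2 * (y r - 1 / m) * (1 - y r * a r)
        = 2 * (y r - 1 / m) * (1 - 1 / m * a r) - 2 * a r * (y r - 1 / m) ^ 2 := by ring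
      _ ≤ 2 / m * (1 - 1 / m * a r) ^ 2 - m / 2 * (y r - 1 / m) ^ 2 := by
        nlinarith [mul_le_mul_of_nonneg_right har.le (sq_nonneg (y r - 1 / m))]
      _ ≤ -(m * b / 4) := by nlinarith
  rw [tendsto_iff_norm_sub_tendsto_zero]
  simpa [sqrt_sq_eq_abs] using hsq.sqrt

end IsClock

/-- The asymptotically autonomous planar system
`ẋ = x (e (1 / z - 1) + x + η)`, `ż = 1 - z (1 - q x)` in the time `G`, with `x > 0`, `z ≥ 1` and
a perturbation `η → 0`. A radial solution produces it with `x` its rescaled logarithmic slope and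
`z` its flux ratio. -/
structure IsSlopeFluxSystem (G g : ℝ → ℝ) (e q : ℝ) (η x z : ℝ → ℝ) : Prop where
  clock : IsClock G g
  tendsto_perturbation : Tendsto η atTop (𝓝 0)
  slope_pos : ∀ᶠ r in atTop, 0 < x r
  one_le_flux : ∀ᶠ r in atTop, 1 ≤ z r
  hasDerivAt_slope : ∀ᶠ r in atTop,
    HasDerivAt x (g r * (x r * (e * (1 / z r - 1) + x r + η r))) r
  hasDerivAt_flux : ∀ᶠ r in atTop, HasDerivAt z (g r * (1 - z r * (1 - q * x r))) r

namespace IsSlopeFluxSystem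

variable {G g η x z : ℝ → ℝ} {e q X : ℝ}

-- The terms `e / z` in the logarithmic derivatives of `x` and `z ^ e` cancel, which singles out
-- this quotient.
theorem hasDerivAt_slope_div_flux_rpow (h : IsSlopeFluxSystem G g e q η x z) :
    ∀ᶠ r in atTop, HasDerivAt (fun s => x s / z s ^ e)
      (g r * (x r / z r ^ e * (η r - (q * e - 1) * x r))) r := by
  filter_upwards [h.one_le_flux, h.hasDerivAt_slope, h.hasDerivAt_flux] with r hz hx' hz'
  have hz0 : 0 < z r := one_pos.trans_le hz
  have hze : 0 < z r ^ e := rpow_pos_of_pos hz0 e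
  refine (hx'.div (hz'.rpow_const (Or.inl hz0.ne')) hze.ne').congr_deriv ?_
  rw [rpow_sub_one hz0.ne']
  field_simp
  ring

theorem tendsto_slope_div_flux_rpow (h : IsSlopeFluxSystem G g e q η x z) (he : 0 ≤ e)
    (hqe : 1 < q * e) : Tendsto (fun r => x r / z r ^ e) atTop (𝓝 0) := by
  refine h.clock.tendsto_zero_of_deriv_le ?_ h.hasDerivAt_slope_div_flux_rpow fun b hb =>
    ⟨b * ((q * e - 1) * b / 2), by nlinarith [mul_pos (sub_pos.2 hqe) hb], ?_⟩
  · filter_upwards [h.slope_pos, h.one_le_flux] with r hx hz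
    exact div_nonneg hx.le (rpow_nonneg (by linarith) _)
  have hrate : 0 < (q * e - 1) * b / 2 := half_pos (mul_pos (sub_pos.2 hqe) hb)
  filter_upwards [h.slope_pos, h.one_le_flux, h.tendsto_perturbation.eventually_lt_const hrate]
    with r hx hz hη hbr
  have hbx : b ≤ x r := hbr.trans (div_le_self hx.le (one_le_rpow hz he))
  have hdecay : η r - (q * e - 1) * x r ≤ -((q * e - 1) * b / 2) := by
    linarith [mul_le_mul_of_nonneg_left hbx (sub_pos.2 hqe).le]
  calc x r / z r ^ e * (η r - (q * e - 1) * x r)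
      ≤ x r / z r ^ e * -((q * e - 1) * b / 2) :=
        mul_le_mul_of_nonneg_left hdecay (hb.le.trans hbr)
    _ ≤ b * -((q * e - 1) * b / 2) := mul_le_mul_of_nonpos_right hbr (neg_nonpos.2 hrate.le)
    _ = -(b * ((q * e - 1) * b / 2)) := mul_neg _ _

theorem tendsto_slope (h : IsSlopeFluxSystem G g e q η x z) (he : 0 < e) (hqe : 1 < q * e)
    (hX : X < e) (hxX : ∀ᶠ r in atTop, x r ≤ X) : Tendsto x atTop (𝓝 0) := by
  refine h.clock.tendsto_zero_of_deriv_le (h.slope_pos.mono fun _ hx => hx.le) h.hasDerivAt_slope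
    fun b hb => ⟨b * ((e - X) / 2), mul_pos hb (by linarith), ?_⟩
  -- Where `x ≥ b`, the smallness of `x / z ^ e` forces `z` to be large.
  have hrate : Tendsto (fun r => e * ((x r / z r ^ e / b) ^ e⁻¹ - 1) + X + η r) atTop
      (𝓝 (e * (0 - 1) + X + 0)) := by
    have hroot : Tendsto (fun r => (x r / z r ^ e / b) ^ e⁻¹) atTop (𝓝 0) := by
      simpa [he.ne'] using ((h.tendsto_slope_div_flux_rpow he.le hqe).div_const b).rpow_const
        (p := e⁻¹) (Or.inr (inv_pos.2 he).le)
    exact (((hroot.sub_const 1).const_mul e).add_const X).add h.tendsto_perturbation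
  filter_upwards [h.slope_pos, h.one_le_flux, hxX,
    hrate.eventually_lt_const (show e * (0 - 1) + X + 0 < -((e - X) / 2) by linarith)]
    with r hx hz hxr hr hbr
  have hz0 : 0 < z r := one_pos.trans_le hz
  have hinv : 1 / z r ≤ (x r / z r ^ e / b) ^ e⁻¹ := by
    rw [← rpow_le_rpow_iff (by positivity) (by positivity) he, ← rpow_mul (by positivity),
      inv_mul_cancel₀ he.ne', rpow_one, div_rpow one_pos.le hz0.le, one_rpow, div_right_comm]
    exact div_le_div_of_nonneg_right ((one_le_div hb).2 hbr) (by positivity)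
  have hdecay : e * (1 / z r - 1) + x r + η r ≤ -((e - X) / 2) := by
    linarith [mul_le_mul_of_nonneg_left hinv he.le]
  calc x r * (e * (1 / z r - 1) + x r + η r) ≤ x r * -((e - X) / 2) :=
        mul_le_mul_of_nonneg_left hdecay hx.le
    _ ≤ b * -((e - X) / 2) := mul_le_mul_of_nonpos_right hbr (by linarith)
    _ = -(b * ((e - X) / 2)) := mul_neg _ _

theorem tendsto_flux (h : IsSlopeFluxSystem G g e q η x z) (he : 0 < e) (hqe : 1 < q * e)
    (hX : X < e) (hxX : ∀ᶠ r in atTop, x r ≤ X) : Tendsto z atTop (𝓝 1) := by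
  have ha : Tendsto (fun r => 1 - q * x r) atTop (𝓝 1) := by
    simpa using ((h.tendsto_slope he hqe hX hxX).const_mul q).const_sub 1
  simpa using h.clock.tendsto_of_linear_ode one_pos h.hasDerivAt_flux ha

end IsSlopeFluxSystem

namespace IsCHModel

variable {ψ g g' G : ℝ → ℝ} {n : ℕ} {r ℓ : ℝ}

theorem pos (hψ : IsCHModel ψ) (hr : 0 < r) : 0 < ψ r :=
  hψ.2.2.2.2 r hr

theorem differentiable_deriv (hψ : IsCHModel ψ) : Differentiable ℝ (deriv ψ) := by
  have h : ContDiff ℝ ((1 : ℕ∞) + 1) ψ := hψ.1.of_le (by exact_mod_cast le_top)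
  exact (contDiff_succ_iff_deriv.1 h).2.2.differentiable (by simp)

theorem hasDerivAt (hψ : IsCHModel ψ) (r : ℝ) : HasDerivAt ψ (deriv ψ r) r :=
  (hψ.1.differentiable (by simp) r).hasDerivAt

theorem one_le_deriv (hψ : IsCHModel ψ) (hr : 0 ≤ r) : 1 ≤ deriv ψ r := by
  have hmono : MonotoneOn (deriv ψ) (Set.Ici 0) :=
    monotoneOn_of_deriv_nonneg (convex_Ici 0) hψ.differentiable_deriv.continuous.continuousOn
      hψ.differentiable_deriv.differentiableOn fun s hs => hψ.2.2.2.1 s (interior_subset hs)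
  simpa only [hψ.2.2.1] using hmono Set.self_mem_Ici hr hr

theorem self_le (hψ : IsCHModel ψ) (hr : 0 ≤ r) : r ≤ ψ r := by
  have hmono : MonotoneOn (fun s => ψ s - s) (Set.Ici 0) :=
    monotoneOn_of_hasDerivWithinAt_nonneg (convex_Ici 0)
      (hψ.1.continuous.sub continuous_id).continuousOn
      (fun s _ => ((hψ.hasDerivAt s).sub (hasDerivAt_id s)).hasDerivWithinAt)
      fun s hs => sub_nonneg.2 (hψ.one_le_deriv (interior_subset hs))
  simpa [hψ.2.1] using hmono Set.self_mem_Ici hr hr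

theorem logDeriv_pos (hψ : IsCHModel ψ) (hr : 0 < r) : 0 < deriv ψ r / ψ r :=
  div_pos (one_pos.trans_le (hψ.one_le_deriv hr.le)) (hψ.pos hr)

theorem isClock (hψ : IsCHModel ψ) : IsClock ψ (deriv ψ) where
  hasDerivAt := .of_forall hψ.hasDerivAt
  pos := (eventually_ge_atTop 0).mono fun _ hr => one_pos.trans_le (hψ.one_le_deriv hr)
  tendsto_atTop :=
    tendsto_atTop_mono' _ ((eventually_ge_atTop 0).mono fun _ hr => hψ.self_le hr) tendsto_id

theorem hasDerivAt_volume (hψ : IsCHModel ψ) (k : ℕ) (r : ℝ) :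
    HasDerivAt (fun r => ∫ s in (0 : ℝ)..r, ψ s ^ k) (ψ r ^ k) r :=
  ((hψ.1.continuous.pow k).integral_hasStrictDerivAt 0 r).hasDerivAt

theorem pow_div_le_volume (hψ : IsCHModel ψ) (k : ℕ) (hr : 0 ≤ r) :
    r ^ (k + 1) / (k + 1) ≤ ∫ s in (0 : ℝ)..r, ψ s ^ k := by
  have hint : ∫ s in (0 : ℝ)..r, s ^ k = r ^ (k + 1) / (k + 1) := by simp
  rw [← hint]
  exact intervalIntegral.integral_mono_on hr ((continuous_pow k).intervalIntegrable _ _)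
    ((hψ.1.continuous.pow k).intervalIntegrable _ _)
    fun s hs => pow_le_pow_left₀ hs.1 (hψ.self_le hs.1) k

theorem volume_pos (hψ : IsCHModel ψ) (k : ℕ) (hr : 0 < r) :
    0 < ∫ s in (0 : ℝ)..r, ψ s ^ k :=
  (show 0 < r ^ (k + 1) / (k + 1) by positivity).trans_le (hψ.pow_div_le_volume k hr.le)

theorem isClock_volume (hψ : IsCHModel ψ) (k : ℕ) :
    IsClock (fun r => ∫ s in (0 : ℝ)..r, ψ s ^ k) (fun r => ψ r ^ k) where
  hasDerivAt := .of_forall (hψ.hasDerivAt_volume k)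
  pos := (eventually_gt_atTop 0).mono fun _ hr => pow_pos (hψ.pos hr) k
  tendsto_atTop :=
    tendsto_atTop_mono' _ ((eventually_ge_atTop 0).mono fun _ hr => hψ.pow_div_le_volume k hr)
      ((tendsto_pow_atTop k.succ_ne_zero).atTop_div_const (by positivity))

theorem isClock_log_volume (hψ : IsCHModel ψ) (n : ℕ) :
    IsClock (fun r => log (∫ s in (0 : ℝ)..r, ψ s ^ (n - 1))) (fun r => (Theta n ψ r)⁻¹) := by
  simpa only [Theta, inv_div] using (hψ.isClock_volume (n - 1)).log_comp

theorem Theta_pos (hψ : IsCHModel ψ) (n : ℕ) (hr : 0 < r) : 0 < Theta n ψ r :=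
  div_pos (hψ.volume_pos (n - 1) hr) (pow_pos (hψ.pos hr) (n - 1))

theorem Theta_mul_pow (hψ : IsCHModel ψ) (n : ℕ) (hr : 0 < r) :
    Theta n ψ r * ψ r ^ (n - 1) = ∫ s in (0 : ℝ)..r, ψ s ^ (n - 1) :=
  div_mul_cancel₀ _ (pow_pos (hψ.pos hr) _).ne'

theorem hasDerivAt_pow (hψ : IsCHModel ψ) (hn : n ≠ 0) (hr : 0 < r) :
    HasDerivAt (fun s => ψ s ^ (n - 1))
      ((n - 1) * (deriv ψ r / ψ r) * ψ r ^ (n - 1)) r := by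
  refine ((hψ.hasDerivAt r).pow (n - 1)).congr_deriv ?_
  have hψr := (hψ.pos hr).ne'
  rcases Nat.exists_eq_succ_of_ne_zero hn with ⟨_ | k, rfl⟩
  · simp
  · push_cast
    simp only [pow_succ]
    field_simp
    ring

theorem hasDerivAt_Theta (hψ : IsCHModel ψ) (hn : n ≠ 0) (hr : 0 < r) :
    HasDerivAt (Theta n ψ) (1 - (n - 1) * (deriv ψ r / ψ r) * Theta n ψ r) r := by
  have hψr := hψ.pos hr
  refine ((hψ.hasDerivAt_volume (n - 1) r).div (hψ.hasDerivAt_pow hn hr)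
    (pow_pos hψr _).ne').congr_deriv ?_
  unfold Theta
  field_simp

theorem pow_div_le_deriv_mul_volume (hψ : IsCHModel ψ) (k : ℕ) (hr : 0 ≤ r) :
    ψ r ^ (k + 1) / (k + 1) ≤ deriv ψ r * ∫ s in (0 : ℝ)..r, ψ s ^ k := by
  have hderiv (s : ℝ) : HasDerivAt
      (fun r => deriv ψ r * (∫ s in (0 : ℝ)..r, ψ s ^ k) - ψ r ^ (k + 1) / (k + 1))
      (deriv (deriv ψ) s * ∫ t in (0 : ℝ)..s, ψ t ^ k) s := by
    refine (((hψ.differentiable_deriv s).hasDerivAt.mul (hψ.hasDerivAt_volume k s)).sub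
      (((hψ.hasDerivAt s).pow (k + 1)).div_const ((k : ℝ) + 1))).congr_deriv ?_
    push_cast
    field_simp
    simp
  have hmono := monotoneOn_of_hasDerivWithinAt_nonneg (convex_Ici (0 : ℝ))
    (fun s _ => (hderiv s).continuousAt.continuousWithinAt)
    (fun s _ => (hderiv s).hasDerivWithinAt) fun s hs => by
      rw [interior_Ici, Set.mem_Ioi] at hs
      exact mul_nonneg (hψ.2.2.2.1 s hs.le) (hψ.volume_pos k hs).le
  simpa [hψ.2.1] using hmono Set.self_mem_Ici hr hr

theorem one_div_le_logDeriv_mul_Theta (hψ : IsCHModel ψ) (hn : n ≠ 0) (hr : 0 < r) :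
    1 / (n : ℝ) ≤ deriv ψ r / ψ r * Theta n ψ r := by
  obtain ⟨k, rfl⟩ := Nat.exists_eq_succ_of_ne_zero hn
  have hψr := hψ.pos hr
  have hconvex := hψ.pow_div_le_deriv_mul_volume k hr.le
  calc (1 : ℝ) / ((k + 1 : ℕ) : ℝ) = ψ r ^ (k + 1) / (k + 1) / ψ r ^ (k + 1) := by
        push_cast
        field_simp
    _ ≤ (deriv ψ r * ∫ s in (0 : ℝ)..r, ψ s ^ k) / ψ r ^ (k + 1) :=
        div_le_div_of_nonneg_right hconvex (by positivity)
    _ = deriv ψ r / ψ r * Theta (k + 1) ψ r := by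
        simp only [Theta, Nat.add_sub_cancel, pow_succ]
        field_simp

theorem tendsto_logDeriv_mul_Theta (hψ : IsCHModel ψ) (hn : 1 < n) (hG : IsClock G g)
    (hg' : ∀ᶠ r in atTop, HasDerivAt g (g' r) r) (hℓ : 0 < ℓ)
    (hlog : Tendsto (fun r => deriv ψ r / ψ r / g r) atTop (𝓝 ℓ))
    (hslow : Tendsto (fun r => g' r / g r ^ 2) atTop (𝓝 0)) :
    Tendsto (fun r => deriv ψ r / ψ r * Theta n ψ r) atTop (𝓝 (1 / (n - 1))) := by
  have hm : 0 < (n : ℝ) - 1 := sub_pos.2 (Nat.one_lt_cast.2 hn)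
  have hΘg : Tendsto (fun r => Theta n ψ r * g r) atTop (𝓝 (1 / ((n - 1) * ℓ))) := by
    refine hG.tendsto_of_linear_ode
      (a := fun r => (n - 1) * (deriv ψ r / ψ r / g r) - g' r / g r ^ 2) (mul_pos hm hℓ) ?_ ?_
    · filter_upwards [hg', hG.pos, eventually_gt_atTop 0] with r hg'r hgr hr
      refine ((hψ.hasDerivAt_Theta (by lia) hr).mul hg'r).congr_deriv ?_
      field_simp
      ring
    · simpa using (hlog.const_mul ((n : ℝ) - 1)).sub hslow
  have hlim := hlog.mul hΘg
  rw [mul_one_div, mul_comm ((n : ℝ) - 1) ℓ, div_mul_cancel_left₀ hℓ.ne', ← one_div] at hlim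
  refine hlim.congr' (hG.pos.mono fun r hgr => ?_)
  field_simp

end IsCHModel

theorem CondA.tendsto_logDeriv_mul_Theta {ψ : ℝ → ℝ} {n : ℕ} (h : CondA ψ) (hψ : IsCHModel ψ)
    (hn : 1 < n) : Tendsto (fun r => deriv ψ r / ψ r * Theta n ψ r) atTop (𝓝 (1 / (n - 1))) := by
  obtain ⟨γ, ℓ, -, hγ, hℓ, hlim⟩ := h
  refine hψ.tendsto_logDeriv_mul_Theta (g' := fun r => -γ * r ^ (-γ - 1)) hn (IsClock.rpow_neg hγ)
    ?_ hℓ ?_ ?_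
  · filter_upwards [eventually_gt_atTop 0] with r hr
    exact hasDerivAt_rpow_const (Or.inl hr.ne')
  · refine hlim.congr' ?_
    filter_upwards [eventually_gt_atTop 0] with r hr
    rw [rpow_neg hr.le, div_inv_eq_mul]
    ring
  · have hpow : Tendsto (fun r : ℝ => -γ * r ^ (-(1 - γ))) atTop (𝓝 0) := by
      simpa using (tendsto_rpow_neg_atTop (sub_pos.2 hγ)).const_mul (-γ)
    refine hpow.congr' ?_
    filter_upwards [eventually_gt_atTop 0] with r hr
    rw [mul_div_assoc, ← rpow_mul_natCast hr.le, ← rpow_sub hr]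
    push_cast
    ring_nf

theorem CondB.tendsto_logDeriv_mul_Theta {ψ : ℝ → ℝ} {n : ℕ} (h : CondB ψ) (hψ : IsCHModel ψ)
    (hn : 1 < n) : Tendsto (fun r => deriv ψ r / ψ r * Theta n ψ r) atTop (𝓝 (1 / (n - 1))) := by
  have hderiv : ∀ r, 0 < r → HasDerivAt (fun s => deriv ψ s / ψ s)
      (deriv (fun s => deriv ψ s / ψ s) r) r := fun r hr =>
    ((hψ.differentiable_deriv r).fun_div (hψ.hasDerivAt r).differentiableAt
      (hψ.pos hr).ne').hasDerivAt
  refine hψ.tendsto_logDeriv_mul_Theta hn hψ.isClock.log_comp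
    ((eventually_gt_atTop 0).mono hderiv) one_pos ?_ ?_
  · refine tendsto_const_nhds.congr' ?_
    filter_upwards [eventually_gt_atTop 0] with r hr
    exact (div_self (hψ.logDeriv_pos hr).ne').symm
  · refine h.2.congr' ?_
    filter_upwards [eventually_gt_atTop 0] with r hr
    rw [((hderiv r hr).log (hψ.logDeriv_pos hr).ne').deriv, ← inv_div (deriv ψ r), sq, ← div_div,
      inv_mul_eq_div]

theorem abs_rpow_mul_self_of_neg {t : ℝ} (ht : t < 0) (s : ℝ) : |t| ^ s * t = -(-t) ^ (s + 1) := by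
  rw [abs_of_neg ht, rpow_add_one (neg_pos.2 ht).ne', mul_neg, neg_neg]

theorem continuous_abs_rpow_mul_self {s : ℝ} (hs : -1 < s) :
    Continuous fun t : ℝ => |t| ^ s * t := by
  refine continuous_iff_continuousAt.2 fun t => ?_
  rcases eq_or_ne t 0 with rfl | ht
  · have hnorm (t : ℝ) : ‖|t| ^ s * t‖ = |t| ^ (s + 1) := by
      rw [norm_mul, norm_of_nonneg (rpow_nonneg (abs_nonneg t) s), norm_eq_abs]
      exact (rpow_add_one' (abs_nonneg t) (by linarith)).symm
    have hlim : Tendsto (fun t : ℝ => |t| ^ (s + 1)) (𝓝 0) (𝓝 0) := by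
      simpa [zero_rpow (show s + 1 ≠ 0 by linarith)] using
        (continuous_abs.tendsto 0).rpow_const (p := s + 1) (Or.inr (by linarith))
    rw [ContinuousAt, mul_zero]
    exact squeeze_zero_norm (fun t => (hnorm t).le) hlim
  · exact (continuous_abs.continuousAt.rpow_const (Or.inl (abs_ne_zero.2 ht))).mul continuousAt_id

section Supercritical

variable {n p q : ℝ}

theorem lt_add_one_of_supercritical (hp : 0 < p) (hpn : p < n) (hq : n * p / (n - p) - 1 ≤ q) :
    p < q + 1 := by
  have hsobolev : p < n * p / (n - p) := by
    rw [lt_div_iff₀ (sub_pos.2 hpn)]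
    nlinarith
  linarith

theorem exponent_le_of_supercritical (hp : 0 < p) (hpn : p < n) (hq : n * p / (n - p) - 1 ≤ q) :
    (p - 1) / p + 1 / (q + 1) ≤ (n - 1) / n := by
  have hn : 0 < n := hp.trans hpn
  calc (p - 1) / p + 1 / (q + 1) ≤ (p - 1) / p + 1 / (n * p / (n - p)) := by
        gcongr
        linarith
    _ = (n - 1) / n := by
        field_simp
        ring

end Supercritical

theorem IsCHModel.Kfun_nonpos {ψ : ℝ → ℝ} {n : ℕ} {p q r : ℝ} (hψ : IsCHModel ψ) (hp : 0 < p)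
    (hpn : p < n) (hq : (n : ℝ) * p / (n - p) - 1 ≤ q) (hr : 0 < r) : Kfun n p q ψ r ≤ 0 := by
  have hn : (0 : ℝ) < n := hp.trans hpn
  have hn1 : 0 ≤ (n : ℝ) - 1 := sub_nonneg.2 (Nat.one_le_cast.2 (Nat.cast_pos.1 hn))
  have hconvex : ((n : ℝ) - 1) / n ≤ (n - 1) * (deriv ψ r / ψ r * Theta n ψ r) := by
    rw [div_eq_mul_one_div]
    exact mul_le_mul_of_nonneg_left
      (hψ.one_div_le_logDeriv_mul_Theta (Nat.cast_pos.1 hn).ne' hr) hn1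
  calc Kfun n p q ψ r = ((p - 1) / p + 1 / (q + 1) -
        (n - 1) * (deriv ψ r / ψ r * Theta n ψ r)) * ψ r ^ (n - 1) := by
        rw [Kfun, ← hψ.Theta_mul_pow n hr]
        ring
    _ ≤ 0 := mul_nonpos_of_nonpos_of_nonneg
        (by linarith [exponent_le_of_supercritical hp hpn hq]) (pow_pos (hψ.pos hr) _).le

/-- The rescaled logarithmic slope `Θ |u'| / u` of a decreasing function `u`: up to sign, the
derivative of `log u` with respect to the logarithm of the volume. -/
noncomputable def logSlope (n : ℕ) (ψ u : ℝ → ℝ) (r : ℝ) : ℝ :=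
  Theta n ψ r * -deriv u r / u r

/-- The ratio `|u'| ^ (p - 1) / (Θ u ^ q)` for a decreasing function `u`. Along a radial solution
it is the mean of `u ^ q` over the ball of radius `r` divided by its value on the boundary, and the
theorem amounts to its convergence to `1`. -/
noncomputable def fluxRatio (n : ℕ) (p q : ℝ) (ψ u : ℝ → ℝ) (r : ℝ) : ℝ :=
  (-deriv u r) ^ (p - 1) / (Theta n ψ r * u r ^ q)

namespace IsRadialSolution

variable {n : ℕ} {p q : ℝ} {ψ : ℝ → ℝ} {T : ℝ≥0∞} {α : ℝ} {u : ℝ → ℝ} {r : ℝ}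

theorem hasDerivAt (hu : IsRadialSolution n p q ψ T α u) (hr : 0 ≤ r) (hrT : ENNReal.ofReal r < T) :
    HasDerivAt u (deriv u r) r :=
  (hu.diff r hr hrT).hasDerivAt

theorem Icc_subset (hrT : ENNReal.ofReal r < T) :
    Set.Icc 0 r ⊆ {s | 0 ≤ s ∧ ENNReal.ofReal s < T} :=
  fun _ hs => ⟨hs.1, (ENNReal.ofReal_le_ofReal hs.2).trans_lt hrT⟩

theorem continuousOn (hu : IsRadialSolution n p q ψ T α u) :
    ContinuousOn u {r | 0 ≤ r ∧ ENNReal.ofReal r < T} :=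
  fun r hr => (hu.diff r hr.1 hr.2).continuousAt.continuousWithinAt

theorem continuousOn_flux (hu : IsRadialSolution n p q ψ T α u) (hψ : IsCHModel ψ) (hp : 1 < p) :
    ContinuousOn (fun r => ψ r ^ (n - 1) * |deriv u r| ^ (p - 2) * deriv u r)
      {r | 0 ≤ r ∧ ENNReal.ofReal r < T} := by
  simp only [mul_assoc]
  exact (hψ.1.continuous.pow (n - 1)).continuousOn.mul
    ((continuous_abs_rpow_mul_self (by linarith)).comp_continuousOn hu.deriv_cont)

theorem continuousOn_source (hu : IsRadialSolution n p q ψ T α u) (hψ : IsCHModel ψ) :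
    ContinuousOn (fun r => ψ r ^ (n - 1) * u r ^ q) {r | 0 ≤ r ∧ ENNReal.ofReal r < T} :=
  (hψ.1.continuous.pow (n - 1)).continuousOn.mul
    (hu.continuousOn.rpow_const fun r hr => Or.inl (hu.pos r hr.1 hr.2).ne')

theorem intervalIntegrable_source (hu : IsRadialSolution n p q ψ T α u) (hψ : IsCHModel ψ)
    (hr : 0 ≤ r) (hrT : ENNReal.ofReal r < T) :
    IntervalIntegrable (fun s => ψ s ^ (n - 1) * u s ^ q) volume 0 r :=
  ((hu.continuousOn_source hψ).mono (Icc_subset hrT)).intervalIntegrable_of_Icc hr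

theorem flux_eq_neg_integral (hu : IsRadialSolution n p q ψ T α u) (hψ : IsCHModel ψ) (hp : 1 < p)
    (hr : 0 ≤ r) (hrT : ENNReal.ofReal r < T) :
    ψ r ^ (n - 1) * |deriv u r| ^ (p - 2) * deriv u r =
      -∫ s in (0 : ℝ)..r, ψ s ^ (n - 1) * u s ^ q := by
  have hftc := intervalIntegral.integral_eq_sub_of_hasDerivAt_of_le hr
    ((hu.continuousOn_flux hψ hp).mono (Icc_subset hrT))
    (fun s hs => hu.eqn s hs.1 (Icc_subset hrT (Set.Ioo_subset_Icc_self hs)).2)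
    (hu.intervalIntegrable_source hψ hr hrT).neg
  simpa [hu.deriv_init] using hftc.symm

theorem deriv_neg (hu : IsRadialSolution n p q ψ T α u) (hψ : IsCHModel ψ) (hp : 1 < p)
    (hr : 0 < r) (hrT : ENNReal.ofReal r < T) : deriv u r < 0 := by
  have hint : 0 < ∫ s in (0 : ℝ)..r, ψ s ^ (n - 1) * u s ^ q := by
    refine intervalIntegral.intervalIntegral_pos_of_pos_on
      (hu.intervalIntegrable_source hψ hr.le hrT) (fun s hs => ?_) hr
    have hsT := (Icc_subset hrT (Set.Ioo_subset_Icc_self hs)).2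
    exact mul_pos (pow_pos (hψ.pos hs.1) _) (rpow_pos_of_pos (hu.pos s hs.1.le hsT) q)
  by_contra! hderiv
  have hflux : 0 ≤ ψ r ^ (n - 1) * |deriv u r| ^ (p - 2) * deriv u r :=
    mul_nonneg (mul_nonneg (pow_pos (hψ.pos hr) _).le (rpow_nonneg (abs_nonneg _) _)) hderiv
  linarith [hu.flux_eq_neg_integral hψ hp hr.le hrT]

theorem antitoneOn (hu : IsRadialSolution n p q ψ T α u) (hψ : IsCHModel ψ) (hp : 1 < p)
    (hrT : ENNReal.ofReal r < T) : AntitoneOn u (Set.Icc 0 r) := by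
  refine antitoneOn_of_deriv_nonpos (convex_Icc 0 r) (hu.continuousOn.mono (Icc_subset hrT))
    (fun s hs => ?_) fun s hs => ?_ <;>
  have hs' := Icc_subset hrT (interior_subset hs)
  · exact (hu.diff s hs'.1 hs'.2).differentiableWithinAt
  · rw [interior_Icc] at hs
    exact (hu.deriv_neg hψ hp hs.1 hs'.2).le

theorem flux_eq (hu : IsRadialSolution n p q ψ T α u) (hψ : IsCHModel ψ) (hp : 1 < p)
    (hr : 0 < r) (hrT : ENNReal.ofReal r < T) :
    ψ r ^ (n - 1) * |deriv u r| ^ (p - 2) * deriv u r =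
      -(ψ r ^ (n - 1) * (-deriv u r) ^ (p - 1)) := by
  rw [mul_assoc, abs_rpow_mul_self_of_neg (hu.deriv_neg hψ hp hr hrT), mul_neg,
    show p - 2 + 1 = p - 1 by ring]

theorem one_le_fluxRatio (hu : IsRadialSolution n p q ψ T α u) (hψ : IsCHModel ψ) (hp : 1 < p)
    (hq : 0 ≤ q) (hr : 0 < r) (hrT : ENNReal.ofReal r < T) : 1 ≤ fluxRatio n p q ψ u r := by
  have hur := rpow_pos_of_pos (hu.pos r hr.le hrT) q
  have hψr := pow_pos (hψ.pos hr) (n - 1)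
  have hmean : (∫ s in (0 : ℝ)..r, ψ s ^ (n - 1)) * u r ^ q ≤
      ψ r ^ (n - 1) * (-deriv u r) ^ (p - 1) := by
    rw [← neg_eq_iff_eq_neg.2 (hu.flux_eq hψ hp hr hrT), hu.flux_eq_neg_integral hψ hp hr.le hrT,
      neg_neg, ← intervalIntegral.integral_mul_const]
    refine intervalIntegral.integral_mono_on hr.le
      (((hψ.1.continuous.pow _).mul continuous_const).intervalIntegrable _ _)
      (hu.intervalIntegrable_source hψ hr.le hrT) fun s hs => ?_
    have hus : u r ≤ u s := hu.antitoneOn hψ hp hrT hs ⟨hr.le, le_rfl⟩ hs.2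
    exact mul_le_mul_of_nonneg_left (rpow_le_rpow (hu.pos r hr.le hrT).le hus hq)
      (pow_nonneg (hs.1.trans (hψ.self_le hs.1)) _)
  rw [fluxRatio, one_le_div (mul_pos (hψ.Theta_pos n hr) hur)]
  rw [← hψ.Theta_mul_pow n hr] at hmean
  exact le_of_mul_le_mul_left (by linarith) hψr

theorem hasDerivAt_neg_deriv_rpow (hu : IsRadialSolution n p q ψ T α u) (hψ : IsCHModel ψ)
    (hn : n ≠ 0) (hp : 1 < p) (hr : 0 < r) (hrT : ENNReal.ofReal r < T) :
    HasDerivAt (fun s => (-deriv u s) ^ (p - 1))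
      (u r ^ q - (n - 1) * (deriv ψ r / ψ r) * (-deriv u r) ^ (p - 1)) r := by
  have hψr := pow_pos (hψ.pos hr) (n - 1)
  have hquot : (fun s => (-deriv u s) ^ (p - 1)) =ᶠ[𝓝 r] fun s =>
      -(ψ s ^ (n - 1) * |deriv u s| ^ (p - 2) * deriv u s) / ψ s ^ (n - 1) := by
    filter_upwards [eventually_gt_nhds hr,
      ENNReal.continuous_ofReal.continuousAt.eventually_lt_const hrT] with s hs hsT
    rw [hu.flux_eq hψ hp hs hsT, neg_neg, mul_div_cancel_left₀ _ (pow_pos (hψ.pos hs) _).ne']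
  refine (((hu.eqn r hr hrT).neg.div (hψ.hasDerivAt_pow hn hr) hψr.ne').congr_of_eventuallyEq
    hquot).congr_deriv ?_
  rw [Pi.neg_apply, hu.flux_eq hψ hp hr hrT]
  field_simp

theorem hasDerivAt_neg_deriv (hu : IsRadialSolution n p q ψ T α u) (hψ : IsCHModel ψ)
    (hn : n ≠ 0) (hp : 1 < p) (hr : 0 < r) (hrT : ENNReal.ofReal r < T) :
    HasDerivAt (fun s => -deriv u s)
      (-deriv u r / (p - 1) *
        (u r ^ q / (-deriv u r) ^ (p - 1) - (n - 1) * (deriv ψ r / ψ r))) r := by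
  have hw : 0 < -deriv u r := neg_pos.2 (hu.deriv_neg hψ hp hr hrT)
  have hp1 : p - 1 ≠ 0 := (sub_pos.2 hp).ne'
  have hroot : (fun s => -deriv u s) =ᶠ[𝓝 r] fun s => ((-deriv u s) ^ (p - 1)) ^ (p - 1)⁻¹ := by
    filter_upwards [eventually_gt_nhds hr,
      ENNReal.continuous_ofReal.continuousAt.eventually_lt_const hrT] with s hs hsT
    exact (rpow_rpow_inv (neg_pos.2 (hu.deriv_neg hψ hp hs hsT)).le hp1).symm
  have hwp := rpow_pos_of_pos hw (p - 1)
  refine (((hu.hasDerivAt_neg_deriv_rpow hψ hn hp hr hrT).rpow_const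
    (Or.inl hwp.ne')).congr_of_eventuallyEq hroot).congr_deriv ?_
  rw [rpow_sub_one hwp.ne', rpow_rpow_inv hw.le hp1]
  field_simp

theorem hasDerivAt_energyF (hu : IsRadialSolution n p q ψ T α u) (hψ : IsCHModel ψ)
    (hn : n ≠ 0) (hp : 1 < p) (hq : q + 1 ≠ 0) (hr : 0 < r) (hrT : ENNReal.ofReal r < T) :
    HasDerivAt (energyF p q u) (-((n - 1) * (deriv ψ r / ψ r) * |deriv u r| ^ p)) r := by
  have hw : 0 < -deriv u r := neg_pos.2 (hu.deriv_neg hψ hp hr hrT)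
  have hur := hu.pos r hr.le hrT
  have hkinetic := ((hu.hasDerivAt_neg_deriv hψ hn hp hr hrT).rpow_const (p := p)
    (Or.inl hw.ne')).const_mul ((p - 1) / p)
  have hpotential := ((hu.hasDerivAt hr.le hrT).rpow_const (p := q + 1)
    (Or.inl hur.ne')).div_const (q + 1)
  have henergy : energyF p q u =ᶠ[𝓝 r] fun s =>
      (p - 1) / p * (-deriv u s) ^ p + u s ^ (q + 1) / (q + 1) := by
    filter_upwards [eventually_gt_nhds hr,
      ENNReal.continuous_ofReal.continuousAt.eventually_lt_const hrT] with s hs hsT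
    rw [energyF, abs_of_neg (hu.deriv_neg hψ hp hs hsT)]
  refine ((hkinetic.add hpotential).congr_of_eventuallyEq henergy).congr_deriv ?_
  have hp1 : p - 1 ≠ 0 := (sub_pos.2 hp).ne'
  have hw0 : deriv u r ≠ 0 := (neg_pos.1 hw).ne
  rw [abs_of_neg (neg_pos.1 hw), add_sub_cancel_right, rpow_sub_one hw.ne']
  field_simp
  ring

theorem hasDerivAt_pohozaevP (hu : IsRadialSolution n p q ψ T α u) (hψ : IsCHModel ψ)
    (hn : n ≠ 0) (hp : 1 < p) (hq : q + 1 ≠ 0) (hr : 0 < r) (hrT : ENNReal.ofReal r < T) :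
    HasDerivAt (pohozaevP n p q ψ u) (Kfun n p q ψ r * |deriv u r| ^ p) r := by
  have hw : 0 < -deriv u r := neg_pos.2 (hu.deriv_neg hψ hp hr hrT)
  have hboundary := ((hu.eqn r hr hrT).mul (hu.hasDerivAt hr.le hrT)).div_const (q + 1)
  have hpohozaev : pohozaevP n p q ψ u = fun s =>
      (∫ t in (0 : ℝ)..s, ψ t ^ (n - 1)) * energyF p q u s +
        ψ s ^ (n - 1) * |deriv u s| ^ (p - 2) * deriv u s * u s / (q + 1) := by
    funext s
    rw [pohozaevP]
    ring
  rw [hpohozaev]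
  refine (((hψ.hasDerivAt_volume (n - 1) r).mul (hu.hasDerivAt_energyF hψ hn hp hq hr hrT)).add
    hboundary).congr_deriv ?_
  rw [hu.flux_eq hψ hp hr hrT, abs_of_neg (neg_pos.1 hw), rpow_sub_one hw.ne', Kfun, energyF,
    rpow_add_one (hu.pos r hr.le hrT).ne', abs_of_neg (neg_pos.1 hw)]
  have hw0 : deriv u r ≠ 0 := (neg_pos.1 hw).ne
  field_simp
  ring

theorem continuousOn_pohozaevP (hu : IsRadialSolution n p q ψ T α u) (hψ : IsCHModel ψ)
    (hp : 1 < p) : ContinuousOn (pohozaevP n p q ψ u) {r | 0 ≤ r ∧ ENNReal.ofReal r < T} := by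
  have hvolume : Continuous fun r => ∫ s in (0 : ℝ)..r, ψ s ^ (n - 1) :=
    continuous_iff_continuousAt.2 fun r => (hψ.hasDerivAt_volume (n - 1) r).continuousAt
  have henergy : ContinuousOn (energyF p q u) {r | 0 ≤ r ∧ ENNReal.ofReal r < T} :=
    ((hu.deriv_cont.abs.rpow_const fun _ _ => Or.inr (by linarith)).const_mul _).add
      ((hu.continuousOn.rpow_const fun r hr => Or.inl (hu.pos r hr.1 hr.2).ne').div_const _)
  exact (hvolume.continuousOn.mul henergy).add
    (((hψ.1.continuous.pow _).continuousOn.div_const _).mul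
      (((continuous_abs_rpow_mul_self (by linarith)).comp_continuousOn hu.deriv_cont).mul
        hu.continuousOn))

theorem pohozaevP_nonpos (hu : IsRadialSolution n p q ψ T α u) (hψ : IsCHModel ψ) (hp : 1 < p)
    (hpn : p < n) (hq : (n : ℝ) * p / (n - p) - 1 ≤ q) (hr : 0 ≤ r)
    (hrT : ENNReal.ofReal r < T) : pohozaevP n p q ψ u r ≤ 0 := by
  have hp0 : 0 < p := by linarith
  have hn : n ≠ 0 := (Nat.cast_pos.1 (hp0.trans hpn)).ne'
  have hq0 : q + 1 ≠ 0 := (hp0.trans (lt_add_one_of_supercritical hp0 hpn hq)).ne'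
  have hanti : AntitoneOn (pohozaevP n p q ψ u) (Set.Icc 0 r) := by
    refine antitoneOn_of_hasDerivWithinAt_nonpos (convex_Icc 0 r)
      (f' := fun s => Kfun n p q ψ s * |deriv u s| ^ p)
      ((hu.continuousOn_pohozaevP hψ hp).mono (Icc_subset hrT)) (fun s hs => ?_) fun s hs => ?_ <;>
    rw [interior_Icc] at hs
    · have hsT := (Icc_subset hrT (Set.Ioo_subset_Icc_self hs)).2
      exact (hu.hasDerivAt_pohozaevP hψ hn hp hq0 hs.1 hsT).hasDerivWithinAt
    · exact mul_nonpos_of_nonpos_of_nonneg (hψ.Kfun_nonpos hp0 hpn hq hs.1)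
        (rpow_nonneg (abs_nonneg _) _)
  have hP0 : pohozaevP n p q ψ u 0 = 0 := by simp [pohozaevP, hu.deriv_init]
  exact (hanti ⟨le_rfl, hr⟩ ⟨hr, le_rfl⟩ hr).trans_eq hP0

theorem logSlope_pos (hu : IsRadialSolution n p q ψ T α u) (hψ : IsCHModel ψ) (hp : 1 < p)
    (hr : 0 < r) (hrT : ENNReal.ofReal r < T) : 0 < logSlope n ψ u r :=
  div_pos (mul_pos (hψ.Theta_pos n hr) (neg_pos.2 (hu.deriv_neg hψ hp hr hrT)))
    (hu.pos r hr.le hrT)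

theorem logSlope_le (hu : IsRadialSolution n p q ψ T α u) (hψ : IsCHModel ψ) (hp : 1 < p)
    (hpn : p < n) (hq : (n : ℝ) * p / (n - p) - 1 ≤ q) (hr : 0 < r)
    (hrT : ENNReal.ofReal r < T) : logSlope n ψ u r ≤ p / ((p - 1) * (q + 1)) := by
  have hp0 : 0 < p := by linarith
  have hp1 : 0 < p - 1 := sub_pos.2 hp
  have hq0 : 0 < q + 1 := hp0.trans (lt_add_one_of_supercritical hp0 hpn hq)
  have hw : 0 < -deriv u r := neg_pos.2 (hu.deriv_neg hψ hp hr hrT)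
  have hur := hu.pos r hr.le hrT
  have hψr := pow_pos (hψ.pos hr) (n - 1)
  have hpohozaev : Theta n ψ r * ((p - 1) / p * -deriv u r) ≤ u r / (q + 1) := by
    have hpotential : 0 ≤ Theta n ψ r * (u r ^ (q + 1) / (q + 1)) :=
      mul_nonneg (hψ.Theta_pos n hr).le (by positivity)
    have hP := hu.pohozaevP_nonpos hψ hp hpn hq hr.le hrT
    rw [pohozaevP, ← hψ.Theta_mul_pow n hr, energyF,
      abs_rpow_mul_self_of_neg (neg_pos.1 hw), abs_of_neg (neg_pos.1 hw),
      show p - 2 + 1 = p - 1 by ring, ← sub_add_cancel p 1, rpow_add_one hw.ne',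
      sub_add_cancel] at hP
    refine le_of_mul_le_mul_left ?_ (mul_pos hψr (rpow_pos_of_pos hw (p - 1)))
    linear_combination hP + ψ r ^ (n - 1) * hpotential
  calc logSlope n ψ u r = p / (p - 1) * (Theta n ψ r * ((p - 1) / p * -deriv u r)) / u r := by
        rw [logSlope]
        field_simp
    _ ≤ p / (p - 1) * (u r / (q + 1)) / u r := by gcongr
    _ = p / ((p - 1) * (q + 1)) := by field_simp

theorem hasDerivAt_logSlope (hu : IsRadialSolution n p q ψ T α u) (hψ : IsCHModel ψ)
    (hn : n ≠ 0) (hp : 1 < p) (hr : 0 < r) (hrT : ENNReal.ofReal r < T) :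
    HasDerivAt (logSlope n ψ u) ((Theta n ψ r)⁻¹ * (logSlope n ψ u r *
      (1 / (p - 1) * (1 / fluxRatio n p q ψ u r - 1) + logSlope n ψ u r +
        p / (p - 1) * (1 - (n - 1) * (deriv ψ r / ψ r * Theta n ψ r))))) r := by
  have hur := hu.pos r hr.le hrT
  have hw : 0 < -deriv u r := neg_pos.2 (hu.deriv_neg hψ hp hr hrT)
  have hΘ := hψ.Theta_pos n hr
  have hp1 : p - 1 ≠ 0 := (sub_pos.2 hp).ne'
  have hψr := hψ.pos hr
  refine (((hψ.hasDerivAt_Theta hn hr).mul (hu.hasDerivAt_neg_deriv hψ hn hp hr hrT)).div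
    (hu.hasDerivAt hr.le hrT) hur.ne').congr_deriv ?_
  simp only [logSlope, fluxRatio, Pi.mul_apply]
  field_simp
  ring

theorem hasDerivAt_fluxRatio (hu : IsRadialSolution n p q ψ T α u) (hψ : IsCHModel ψ)
    (hn : n ≠ 0) (hp : 1 < p) (hr : 0 < r) (hrT : ENNReal.ofReal r < T) :
    HasDerivAt (fluxRatio n p q ψ u) ((Theta n ψ r)⁻¹ *
      (1 - fluxRatio n p q ψ u r * (1 - q * logSlope n ψ u r))) r := by
  have hur := hu.pos r hr.le hrT
  have huq := rpow_pos_of_pos hur q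
  have hΘ := hψ.Theta_pos n hr
  have hψr := hψ.pos hr
  refine ((hu.hasDerivAt_neg_deriv_rpow hψ hn hp hr hrT).div ((hψ.hasDerivAt_Theta hn hr).mul
    ((hu.hasDerivAt hr.le hrT).rpow_const (Or.inl hur.ne'))) (mul_pos hΘ huq).ne').congr_deriv ?_
  simp only [logSlope, fluxRatio, Pi.mul_apply]
  rw [rpow_sub_one hur.ne']
  field_simp
  ring

theorem fluxRatio_mul_rpow (hu : IsRadialSolution n p q ψ T α u) (hψ : IsCHModel ψ) (hp : 1 < p)
    (hr : 0 < r) (hrT : ENNReal.ofReal r < T) :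
    (fluxRatio n p q ψ u r * (deriv ψ r / ψ r * Theta n ψ r)) ^ (1 / (p - 1)) =
      -deriv u r * u r ^ (-(q / (p - 1))) * (deriv ψ r / ψ r) ^ (1 / (p - 1)) := by
  have hur := hu.pos r hr.le hrT
  have hw : 0 < -deriv u r := neg_pos.2 (hu.deriv_neg hψ hp hr hrT)
  have hwp := rpow_nonneg hw.le (p - 1)
  have hlog := (hψ.logDeriv_pos hr).le
  have hΘ : Theta n ψ r ≠ 0 := (hψ.Theta_pos n hr).ne'
  calc (fluxRatio n p q ψ u r * (deriv ψ r / ψ r * Theta n ψ r)) ^ (1 / (p - 1))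
      = ((-deriv u r) ^ (p - 1) * u r ^ (-q) * (deriv ψ r / ψ r)) ^ (p - 1)⁻¹ := by
        rw [fluxRatio, rpow_neg hur.le, one_div]
        congr 1
        field_simp
    _ = -deriv u r * u r ^ (-(q / (p - 1))) * (deriv ψ r / ψ r) ^ (1 / (p - 1)) := by
        rw [mul_rpow (mul_nonneg hwp (rpow_nonneg hur.le _)) hlog,
          mul_rpow hwp (rpow_nonneg hur.le _), rpow_rpow_inv hw.le (sub_pos.2 hp).ne',
          ← rpow_mul hur.le, ← div_eq_mul_inv, neg_div, one_div]

theorem isSlopeFluxSystem (hu : IsRadialSolution n p q ψ ⊤ α u) (hψ : IsCHModel ψ) (hn : 1 < n)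
    (hp : 1 < p) (hq : 0 ≤ q)
    (hΘ : Tendsto (fun r => deriv ψ r / ψ r * Theta n ψ r) atTop (𝓝 (1 / ((n : ℝ) - 1)))) :
    IsSlopeFluxSystem (fun r => log (∫ s in (0 : ℝ)..r, ψ s ^ (n - 1))) (fun r => (Theta n ψ r)⁻¹)
      (1 / (p - 1)) q
      (fun r => p / (p - 1) * (1 - (n - 1) * (deriv ψ r / ψ r * Theta n ψ r)))
      (logSlope n ψ u) (fluxRatio n p q ψ u) where
  clock := hψ.isClock_log_volume n
  tendsto_perturbation := by
    have hm : (n : ℝ) - 1 ≠ 0 := (sub_pos.2 (Nat.one_lt_cast.2 hn)).ne'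
    simpa [hm] using ((hΘ.const_mul ((n : ℝ) - 1)).const_sub 1).const_mul (p / (p - 1))
  slope_pos := (eventually_gt_atTop 0).mono fun _ hr =>
    hu.logSlope_pos hψ hp hr ENNReal.ofReal_lt_top
  one_le_flux := (eventually_gt_atTop 0).mono fun _ hr =>
    hu.one_le_fluxRatio hψ hp hq hr ENNReal.ofReal_lt_top
  hasDerivAt_slope := (eventually_gt_atTop 0).mono fun _ hr =>
    hu.hasDerivAt_logSlope hψ (by lia) hp hr ENNReal.ofReal_lt_top
  hasDerivAt_flux := (eventually_gt_atTop 0).mono fun _ hr =>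
    hu.hasDerivAt_fluxRatio hψ (by lia) hp hr ENNReal.ofReal_lt_top

end IsRadialSolution

theorem statement_16_general {n : ℕ} {p q : ℝ} (hp : 1 < p) (hpn : p < n)
    (hq : (n : ℝ) * p / ((n : ℝ) - p) - 1 ≤ q) {ψ : ℝ → ℝ} (hψ : IsCHModel ψ)
    (hΘ : Tendsto (fun r => deriv ψ r / ψ r * Theta n ψ r) atTop (𝓝 (1 / ((n : ℝ) - 1))))
    {α : ℝ} {u : ℝ → ℝ} (hu : IsRadialSolution n p q ψ ⊤ α u) :
    Tendsto (fun r => -deriv u r * u r ^ (-(q / (p - 1))) * (deriv ψ r / ψ r) ^ (1 / (p - 1)))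
      atTop (𝓝 ((1 / ((n : ℝ) - 1)) ^ (1 / (p - 1)))) := by
  have hp1 : 0 < p - 1 := sub_pos.2 hp
  have hn : 1 < n := Nat.one_lt_cast.1 (hp.trans hpn)
  have hpq : p < q + 1 := lt_add_one_of_supercritical (zero_lt_one.trans hp) hpn hq
  have hslope : p / ((p - 1) * (q + 1)) < 1 / (p - 1) := by
    rw [div_lt_div_iff₀ (mul_pos hp1 (by linarith)) hp1]
    nlinarith
  have hflux : Tendsto (fluxRatio n p q ψ u) atTop (𝓝 1) :=
    (hu.isSlopeFluxSystem hψ hn hp (by linarith) hΘ).tendsto_flux (one_div_pos.2 hp1)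
      (by rw [mul_one_div, one_lt_div hp1]; linarith) hslope
      ((eventually_gt_atTop 0).mono fun _ hr =>
        hu.logSlope_le hψ hp hpn hq hr ENNReal.ofReal_lt_top)
  have hlim := (hflux.mul hΘ).rpow_const (p := 1 / (p - 1)) (Or.inr (one_div_pos.2 hp1).le)
  rw [one_mul] at hlim
  exact hlim.congr' ((eventually_gt_atTop 0).mono fun _ hr =>
    hu.fluxRatio_mul_rpow hψ hp hr ENNReal.ofReal_lt_top)

/-- `(-u') u^{-q/(p-1)} (ψ'/ψ)^{1/(p-1)} → (1/(n-1))^{1/(p-1)}`. -/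
theorem statement_16 (n : ℕ) (hn : 2 ≤ n) (p q : ℝ) (hp1 : 1 < p) (hpn : p < n)
    (hq : (n : ℝ) * p / ((n : ℝ) - p) - 1 ≤ q)
    (ψ : ℝ → ℝ) (hψ : IsCHModel ψ)
    (hpc : Tendsto (fun r : ℝ => ∫ s in (0:ℝ)..r, Theta n ψ s ^ (1 / (p - 1)))
      atTop atTop)
    (hcond : CondA ψ ∨ CondB ψ)
    (α : ℝ) (hα : 0 < α)
    (u : ℝ → ℝ) (hu : IsRadialSolution n p q ψ ⊤ α u) :
    Tendsto (fun r : ℝ => -deriv u r * u r ^ (-(q / (p - 1))) *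
        (deriv ψ r / ψ r) ^ (1 / (p - 1))) atTop
      (nhds ((1 / ((n : ℝ) - 1)) ^ (1 / (p - 1)))) :=
  statement_16_general hp1 hpn hq hψ (hcond.elim (·.tendsto_logDeriv_mul_Theta hψ (by lia))
    (·.tendsto_logDeriv_mul_Theta hψ (by lia))) hu
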